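/- Let q be a real number with 0 < q and q ≠ 1, let h₁, h₂, l₁, α₁, λ be real numbers and t₁, t₂ nonzero reals. Assume λ + α₁ = -N for some positive integer N (so (q^{λ+α₁};q)_n = 0 for all n > N and the series below is a finite sum). Then the function g(x) = x^{-α₁} · Σ_{n=0}^{N} (q^{-λ-α₁+h₁+1/2}·t₁/x)^n · (q^{λ+α₁};q)_n · Σ_{ℓ=0}^{n} [(q^{λ+α₁-h₁+l₁};q)_ℓ / ((q;q)_{n-ℓ}(q;q)_ℓ)] · q^{-ℓ(2n-ℓ-1)/2} · (-q^{-λ-α₁-l₁+h₂}·t₂/t₁)^ℓ satisfies the variant of the confluent q-hypergeometric equation of type (1,2) for all x > 0. -/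

import Mathlib

/-- The finite q-shifted factorial `(a;q)_n = ∏_{i=0}^{n-1} (1 - a q^i)`. -/
noncomputable def qPoch (q a : ℝ) (n : ℕ) : ℝ :=
  ∏ i ∈ Finset.range n, (1 - a * q ^ i)

/-- The variant of the confluent q-hypergeometric equation of type (1,2) (for `x > 0`). -/
def confEq12 (q h₁ h₂ l₁ α₁ lam t₁ t₂ : ℝ) (g : ℝ → ℝ) : Prop :=
  ∀ x : ℝ, 0 < x →
    q ^ (h₁ + h₂ - l₁ - 2 * lam + 1/2) * t₂ * (q ^ (l₁ - 1/2) * t₁ - x) * g (q * x)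
    + (x - q ^ (h₁ + 1/2) * t₁) * (x - q ^ (h₂ + 1/2) * t₂) * g (x / q)
    - (q ^ α₁ * x ^ 2
        - q ^ (h₁ + h₂ - lam + 1/2) * (q ^ (-h₂) * t₁ + q ^ (-h₁) * t₂ + q ^ (-l₁) * t₂) * x
        + q ^ (h₁ + h₂ - lam) * (q + 1) * t₁ * t₂) * g x = 0

/-- The general term of the inner sum. -/
noncomputable def sT (q B D : ℝ) (n l : ℕ) : ℝ :=
  qPoch q B l / (qPoch q q (n - l) * qPoch q q l) *
    q ^ (-(l : ℝ) * (2 * (n : ℝ) - (l : ℝ) - 1) / 2) * D ^ l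

/-- The inner sum. -/
noncomputable def sS (q B D : ℝ) (n : ℕ) : ℝ := ∑ l ∈ Finset.range (n + 1), sT q B D n l

lemma qPoch_zero (q a : ℝ) : qPoch q a 0 = 1 := by simp [qPoch]

lemma qPoch_succ (q a : ℝ) (n : ℕ) : qPoch q a (n + 1) = qPoch q a n * (1 - a * q ^ n) := by
  simp [qPoch, Finset.prod_range_succ]

lemma one_sub_pow_ne {q : ℝ} (hq : 0 < q) (hq1 : q ≠ 1) (n : ℕ) : 1 - q * q ^ n ≠ 0 := by
  intro h
  have h1 : q ^ (n + 1) = 1 := by rw [pow_succ]; linarith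
  exact hq1 ((pow_eq_one_iff_of_nonneg hq.le (Nat.succ_ne_zero n)).1 h1)

lemma qPoch_ne {q : ℝ} (hq : 0 < q) (hq1 : q ≠ 1) (n : ℕ) : qPoch q q n ≠ 0 := by
  rw [qPoch, Finset.prod_ne_zero_iff]
  intro i _
  exact one_sub_pow_ne hq hq1 i

lemma sT_one {q : ℝ} (hq : 0 < q) (hq1 : q ≠ 1) (B D : ℝ) {m l : ℕ} (hl : l ≤ m) :
    sT q B D (m + 1) l * (1 - q ^ (m + 1 - l)) = sT q B D m l / q ^ l := by
  obtain ⟨k, rfl⟩ := Nat.exists_eq_add_of_le hl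
  have e1 : l + k + 1 - l = k + 1 := by omega
  have e2 : l + k - l = k := by omega
  have e3 : q ^ (-(l : ℝ) * (2 * ((l + k + 1 : ℕ) : ℝ) - (l : ℝ) - 1) / 2)
      = q ^ (-(l : ℝ) * (2 * ((l + k : ℕ) : ℝ) - (l : ℝ) - 1) / 2) / q ^ l := by
    rw [← Real.rpow_natCast q l, ← Real.rpow_sub hq]
    congr 1
    push_cast
    ring
  unfold sT
  rw [e1, e2, e3, qPoch_succ, pow_succ]
  have h1 := qPoch_ne hq hq1 k
  have h2 := qPoch_ne hq hq1 l
  have h3 := one_sub_pow_ne hq hq1 k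
  have h4 : 1 - q ^ k * q ≠ 0 := by rwa [mul_comm]
  field_simp

lemma sT_two {q : ℝ} (hq : 0 < q) (hq1 : q ≠ 1) (B D : ℝ) {m l : ℕ} (hl : l ≤ m) :
    sT q B D (m + 1) (l + 1) * (1 - q ^ (l + 1)) / q ^ (l + 1)
      = sT q B D m l * (D * (1 - B * q ^ l) / q ^ l) / q ^ (m + 1) := by
  obtain ⟨k, rfl⟩ := Nat.exists_eq_add_of_le hl
  have e1 : l + k + 1 - (l + 1) = k := by omega
  have e2 : l + k - l = k := by omega
  have e3 : q ^ (-((l + 1 : ℕ) : ℝ) * (2 * ((l + k + 1 : ℕ) : ℝ) - ((l + 1 : ℕ) : ℝ) - 1) / 2)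
      = q ^ (-(l : ℝ) * (2 * ((l + k : ℕ) : ℝ) - (l : ℝ) - 1) / 2) / q ^ (l + k) := by
    rw [← Real.rpow_natCast q (l + k), ← Real.rpow_sub hq]
    congr 1
    push_cast
    ring
  unfold sT
  rw [e1, e2, e3, qPoch_succ, qPoch_succ]
  have h1 := qPoch_ne hq hq1 k
  have h2 := qPoch_ne hq hq1 l
  have h3 := one_sub_pow_ne hq hq1 l
  have h4 : 1 - q ^ (l + 1) = 1 - q * q ^ l := by ring
  rw [h4]
  have h5 : 1 - q ^ l * q ≠ 0 := by rwa [mul_comm]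
  field_simp
  ring

lemma sum_one {q : ℝ} (hq : 0 < q) (hq1 : q ≠ 1) (B D : ℝ) (m : ℕ) :
    ∑ l ∈ Finset.range (m + 2), sT q B D (m + 1) l * (1 - q ^ (m + 1 - l))
      = ∑ l ∈ Finset.range (m + 1), sT q B D m l / q ^ l := by
  rw [Finset.sum_range_succ]
  simp only [Nat.sub_self, pow_zero, sub_self, mul_zero, add_zero]
  refine Finset.sum_congr rfl fun l hl => sT_one hq hq1 B D ?_
  have := Finset.mem_range.1 hl
  omega

lemma sum_two {q : ℝ} (hq : 0 < q) (hq1 : q ≠ 1) (B D : ℝ) (m : ℕ) :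
    ∑ l ∈ Finset.range (m + 2), sT q B D (m + 1) l * (1 - q ^ l) / q ^ l
      = (∑ l ∈ Finset.range (m + 1), sT q B D m l * (D * (1 - B * q ^ l) / q ^ l))
        / q ^ (m + 1) := by
  rw [Finset.sum_range_succ']
  simp only [pow_zero, sub_self, mul_zero, zero_div, add_zero]
  rw [Finset.sum_div]
  refine Finset.sum_congr rfl fun l hl => sT_two hq hq1 B D ?_
  have := Finset.mem_range.1 hl
  omega

lemma sS_first {q : ℝ} (hq : 0 < q) (hq1 : q ≠ 1) (B D : ℝ) (m : ℕ) :
    (1 - q ^ (m + 1)) * sS q B D (m + 1)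
      = ∑ l ∈ Finset.range (m + 1), sT q B D m l * ((1 + D) / q ^ l - D * B) := by
  have h1 := sum_one hq hq1 B D m
  have h2 := sum_two hq hq1 B D m
  have hqm : q ^ (m + 1) ≠ 0 := by positivity
  rw [eq_div_iff hqm, Finset.sum_mul] at h2
  have : (1 - q ^ (m + 1)) * sS q B D (m + 1)
      = ∑ l ∈ Finset.range (m + 2), sT q B D (m + 1) l * (1 - q ^ (m + 1 - l))
        + ∑ l ∈ Finset.range (m + 2), sT q B D (m + 1) l * (1 - q ^ l) / q ^ l * q ^ (m + 1) := by
    rw [sS, Finset.mul_sum, ← Finset.sum_add_distrib]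
    refine Finset.sum_congr rfl fun l hl => ?_
    have hl' : l ≤ m + 1 := by have := Finset.mem_range.1 hl; omega
    obtain ⟨k, hk⟩ := Nat.exists_eq_add_of_le hl'
    rw [hk, Nat.add_sub_cancel_left, pow_add]
    field_simp
    ring
  rw [this, h1, h2, ← Finset.sum_add_distrib]
  refine Finset.sum_congr rfl fun l _ => ?_
  field_simp
  ring

lemma sS_rec {q : ℝ} (hq : 0 < q) (hq1 : q ≠ 1) (B D : ℝ) (m : ℕ) :
    (1 - q ^ (m + 2)) * sS q B D (m + 2)
      = (1 - D * B + D / q ^ (m + 1)) * sS q B D (m + 1) - D * B / q ^ (m + 1) * sS q B D m := by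
  rw [sS_first hq hq1 B D (m + 1)]
  have h1 := sum_one hq hq1 B D m
  have h2 := sum_two hq hq1 B D m
  have : ∑ l ∈ Finset.range (m + 1 + 1), sT q B D (m + 1) l * ((1 + D) / q ^ l - D * B)
      = (1 - D * B + D / q ^ (m + 1)) * sS q B D (m + 1)
        + ∑ l ∈ Finset.range (m + 2), sT q B D (m + 1) l * (1 - q ^ l) / q ^ l
        - D / q ^ (m + 1)
          * ∑ l ∈ Finset.range (m + 2), sT q B D (m + 1) l * (1 - q ^ (m + 1 - l)) := by
    rw [sS, Finset.mul_sum, Finset.mul_sum, ← Finset.sum_add_distrib, ← Finset.sum_sub_distrib]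
    refine Finset.sum_congr rfl fun l hl => ?_
    have hl' : l ≤ m + 1 := by have := Finset.mem_range.1 hl; omega
    obtain ⟨k, hk⟩ := Nat.exists_eq_add_of_le hl'
    rw [hk, Nat.add_sub_cancel_left, pow_add]
    field_simp
    ring
  rw [this, h1, h2, sS, sS, Finset.sum_div, Finset.mul_sum, Finset.mul_sum, Finset.mul_sum,
    add_sub_assoc, sub_eq_add_neg (∑ l ∈ Finset.range (m + 1 + 1), _)]
  rw [add_assoc, ← sub_eq_add_neg, sub_eq_add_neg]
  congr 1
  rw [← Finset.sum_sub_distrib, ← Finset.sum_neg_distrib]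
  refine Finset.sum_congr rfl fun l _ => ?_
  field_simp
  ring

lemma sS_zero (q B D : ℝ) : sS q B D 0 = 1 := by
  simp [sS, sT, qPoch_zero]

lemma sS_one {q : ℝ} (hq : 0 < q) (hq1 : q ≠ 1) (B D : ℝ) :
    (1 - q) * sS q B D 1 = 1 - D * B + D := by
  have := sS_first hq hq1 B D 0
  simp [sT, qPoch_zero] at this
  rw [this]; ring

/-- coefficients in the expansion -/
noncomputable def eC (q A B D : ℝ) (n : ℕ) : ℝ := (1 / A) ^ n * qPoch q A n * sS q B D n

lemma tele {q A : ℝ} (hq : 0 < q) (hq1 : q ≠ 1) (hA : A ≠ 0) (B D z : ℝ) (M : ℕ) :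
    ∑ n ∈ Finset.range (M + 2), z ^ n * eC q A B D n *
        ((q ^ n - 1) + z * ((1 / A) * (1 - D * B + D / q ^ n) * (1 - A * q ^ n))
          + z ^ 2 * (-(D * B) / (A ^ 2 * q ^ (n + 1)) * (1 - A * q ^ n) * (1 - A * q ^ (n + 1))))
      = z ^ (M + 2) * ((1 / A) * (1 - D * B + D / q ^ (M + 1)) * (1 - A * q ^ (M + 1))
            * eC q A B D (M + 1)
          + -(D * B) / (A ^ 2 * q ^ (M + 1)) * (1 - A * q ^ M) * (1 - A * q ^ (M + 1))
            * eC q A B D M)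
        + z ^ (M + 3) * (-(D * B) / (A ^ 2 * q ^ (M + 2)) * (1 - A * q ^ (M + 1))
            * (1 - A * q ^ (M + 2))) * eC q A B D (M + 1) := by
  induction M with
  | zero =>
    rw [Finset.sum_range_succ, Finset.sum_range_succ, Finset.sum_range_zero]
    have h1 := sS_one hq hq1 B D
    have : eC q A B D 1 * (1 - q) = (1 / A) * (1 - A) * (1 - D * B + D) := by
      rw [← h1]
      simp [eC, qPoch_succ, qPoch_zero]
      ring
    have h0 : eC q A B D 0 = 1 := by simp [eC, qPoch_zero, sS_zero]
    rw [h0]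
    simp only [zero_add, pow_zero, pow_one, mul_one, div_one]
    linear_combination (-z) * this
  | succ M ih =>
    rw [Finset.sum_range_succ, ih]
    have h1 := sS_rec hq hq1 B D M
    have : eC q A B D (M + 2) * (1 - q ^ (M + 2))
        = (1 / A) * (1 - D * B + D / q ^ (M + 1)) * (1 - A * q ^ (M + 1)) * eC q A B D (M + 1)
          + -(D * B) / (A ^ 2 * q ^ (M + 1)) * (1 - A * q ^ M) * (1 - A * q ^ (M + 1))
            * eC q A B D M := by
      have : eC q A B D (M + 2) * (1 - q ^ (M + 2))
        = (1 / A) ^ (M + 2) * qPoch q A (M + 2) * ((1 - q ^ (M + 2)) * sS q B D (M + 2)) := by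
        rw [eC]; ring
      rw [this, h1, eC, eC, qPoch_succ, qPoch_succ]
      simp only [one_div, inv_pow]
      field_simp
      ring
    linear_combination (-z ^ (M + 2)) * this

/-- The termwise identity. -/
lemma coef (H A a P Q L t₁ t₂ x u : ℝ) (hH : H ≠ 0) (hA : A ≠ 0) (ha : a ≠ 0) (hP : P ≠ 0)
    (hQ : Q ≠ 0) (hL : L ≠ 0) (ht₁ : t₁ ≠ 0) (hx : x ≠ 0) (hu : u ≠ 0) :
    P * Q / L / (A / a) ^ 2 * H * t₂ * (L / H * t₁ - x) * (a⁻¹ * (1 / u))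
    + (x - P * H * t₁) * (x - Q * H * t₂) * (a * u)
    - (a * x ^ 2 - P * Q / (A / a) * H * (Q⁻¹ * t₁ + P⁻¹ * t₂ + L⁻¹ * t₂) * x
        + P * Q / (A / a) * (H ^ 2 + 1) * t₁ * t₂)
    = a * x ^ 2 * ((u - 1) + (P * H * t₁ / x) * ((1 / A) *
        (1 - (-(Q / (A * L) * t₂ / t₁)) * (A / P * L)
          + (-(Q / (A * L) * t₂ / t₁)) / u) * (1 - A * u))
          + (P * H * t₁ / x) ^ 2 * (-((-(Q / (A * L) * t₂ / t₁)) * (A / P * L))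
            / (A ^ 2 * (u * H ^ 2)) * (1 - A * u) * (1 - A * (u * H ^ 2)))) := by
  field_simp
  ring

theorem stmt2 (q h₁ h₂ l₁ α₁ lam t₁ t₂ : ℝ) (N : ℕ)
    (hq : 0 < q) (hq1 : q ≠ 1) (ht₁ : t₁ ≠ 0) (ht₂ : t₂ ≠ 0)
    (hN : 0 < N) (hNlam : lam + α₁ = -(N : ℝ)) :
    confEq12 q h₁ h₂ l₁ α₁ lam t₁ t₂ (fun x =>
      x ^ (-α₁) * ∑ n ∈ Finset.range (N + 1),
        (q ^ (-lam - α₁ + h₁ + 1/2) * t₁ / x) ^ n * qPoch q (q ^ (lam + α₁)) n *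
          ∑ l ∈ Finset.range (n + 1),
            qPoch q (q ^ (lam + α₁ - h₁ + l₁)) l / (qPoch q q (n - l) * qPoch q q l) *
              q ^ (-(l : ℝ) * (2 * (n : ℝ) - (l : ℝ) - 1) / 2) *
              (-(q ^ (-lam - α₁ - l₁ + h₂) * t₂ / t₁)) ^ l) := by
  intro x hx
  obtain ⟨M, rfl⟩ : ∃ M, N = M + 1 := ⟨N - 1, by omega⟩
  have hAq : q ^ (lam + α₁) * q ^ (M + 1) = 1 := by
    rw [hNlam, Real.rpow_neg hq.le, Real.rpow_natCast]
    exact inv_mul_cancel₀ (by positivity)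
  obtain ⟨H, hHd⟩ : ∃ H, H = q ^ (1 / 2 : ℝ) := ⟨_, rfl⟩
  obtain ⟨A, hAd⟩ : ∃ A, A = q ^ (lam + α₁) := ⟨_, rfl⟩
  obtain ⟨a, had⟩ : ∃ a, a = q ^ α₁ := ⟨_, rfl⟩
  obtain ⟨P, hPd⟩ : ∃ P, P = q ^ h₁ := ⟨_, rfl⟩
  obtain ⟨Q, hQd⟩ : ∃ Q, Q = q ^ h₂ := ⟨_, rfl⟩
  obtain ⟨L, hLd⟩ : ∃ L, L = q ^ l₁ := ⟨_, rfl⟩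
  have hH : 0 < H := hHd ▸ Real.rpow_pos_of_pos hq _
  have hA : 0 < A := hAd ▸ Real.rpow_pos_of_pos hq _
  have ha : 0 < a := had ▸ Real.rpow_pos_of_pos hq _
  have hP : 0 < P := hPd ▸ Real.rpow_pos_of_pos hq _
  have hQ : 0 < Q := hQd ▸ Real.rpow_pos_of_pos hq _
  have hL : 0 < L := hLd ▸ Real.rpow_pos_of_pos hq _
  have hHq : H ^ 2 = q := by
    rw [hHd, ← Real.rpow_natCast, ← Real.rpow_mul hq.le]; norm_num
  have hlam : q ^ lam = A / a := by
    rw [hAd, had, ← Real.rpow_sub hq]; congr 1; ring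
  have E1 : q ^ (h₁ + h₂ - l₁ - 2 * lam + 1/2) = P * Q / L / (A / a) ^ 2 * H := by
    rw [Real.rpow_add hq, Real.rpow_sub hq, Real.rpow_sub hq, Real.rpow_add hq, two_mul,
      Real.rpow_add hq, hlam, ← hHd, ← hPd, ← hQd, ← hLd, sq]
  have E2 : q ^ (l₁ - 1/2) = L / H := by rw [Real.rpow_sub hq, ← hLd, ← hHd]
  have E3 : q ^ (h₁ + 1/2) = P * H := by rw [Real.rpow_add hq, ← hPd, ← hHd]
  have E4 : q ^ (h₂ + 1/2) = Q * H := by rw [Real.rpow_add hq, ← hQd, ← hHd]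
  have E5 : q ^ (h₁ + h₂ - lam + 1/2) = P * Q / (A / a) * H := by
    rw [Real.rpow_add hq, Real.rpow_sub hq, Real.rpow_add hq, hlam, ← hHd, ← hPd, ← hQd]
  have E6 : q ^ (h₁ + h₂ - lam) = P * Q / (A / a) := by
    rw [Real.rpow_sub hq, Real.rpow_add hq, hlam, ← hPd, ← hQd]
  have E7 : q ^ (-h₁) = P⁻¹ := by rw [Real.rpow_neg hq.le, ← hPd]
  have E8 : q ^ (-h₂) = Q⁻¹ := by rw [Real.rpow_neg hq.le, ← hQd]
  have E9 : q ^ (-l₁) = L⁻¹ := by rw [Real.rpow_neg hq.le, ← hLd]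
  have E10 : q ^ (-lam - α₁ + h₁ + 1/2) = 1 / A * (P * H) := by
    rw [Real.rpow_add hq, Real.rpow_add hq, show -lam - α₁ = -(lam + α₁) by ring,
      Real.rpow_neg hq.le, ← hAd, ← hPd, ← hHd]; ring
  have E11 : q ^ (lam + α₁ - h₁ + l₁) = A / P * L := by
    rw [Real.rpow_add hq, Real.rpow_sub hq, ← hAd, ← hPd, ← hLd]
  have E12 : q ^ (-lam - α₁ - l₁ + h₂) = Q / (A * L) := by
    rw [hAd, hLd, hQd, ← Real.rpow_add hq, ← Real.rpow_sub hq]; congr 1; ring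
  have X1 : (q * x) ^ (-α₁) = a⁻¹ * x ^ (-α₁) := by
    rw [Real.mul_rpow hq.le hx.le, Real.rpow_neg hq.le, ← had]
  have X2 : (x / q) ^ (-α₁) = a * x ^ (-α₁) := by
    rw [Real.div_rpow hx.le hq.le, Real.rpow_neg hq.le, ← had]
    field_simp
  rw [← hAd] at hAq
  simp only [E1, E2, E3, E4, E5, E6, E7, E8, E9, E10, E11, E12, X1, X2, ← hAd, ← had]
  have key : ∀ y : ℝ, ∑ n ∈ Finset.range (M + 1 + 1),
        (1 / A * (P * H) * t₁ / y) ^ n * qPoch q A n *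
          ∑ l ∈ Finset.range (n + 1),
            qPoch q (A / P * L) l / (qPoch q q (n - l) * qPoch q q l) *
              q ^ (-(l : ℝ) * (2 * (n : ℝ) - (l : ℝ) - 1) / 2) *
              (-(Q / (A * L) * t₂ / t₁)) ^ l
      = ∑ n ∈ Finset.range (M + 2), (P * H * t₁ / y) ^ n *
          eC q A (A / P * L) (-(Q / (A * L) * t₂ / t₁)) n := by
    intro y
    refine Finset.sum_congr rfl fun n _ => ?_
    rw [eC, sS]
    simp only [sT]
    rw [show 1 / A * (P * H) * t₁ / y = (1 / A) * (P * H * t₁ / y) by ring, mul_pow]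
    ring
  rw [key, key, key]
  have T := tele hq hq1 hA.ne' (A / P * L) (-(Q / (A * L) * t₂ / t₁)) (P * H * t₁ / x) M
  rw [hAq] at T
  simp only [sub_self, mul_zero, zero_mul, add_zero] at T
  have S : ∀ c₁ c₂ c₃ : ℝ, ∀ e : ℕ → ℝ,
      c₁ * (a⁻¹ * x ^ (-α₁) * ∑ n ∈ Finset.range (M + 2), (P * H * t₁ / (q * x)) ^ n * e n)
      + c₂ * (a * x ^ (-α₁) * ∑ n ∈ Finset.range (M + 2), (P * H * t₁ / (x / q)) ^ n * e n)
      - c₃ * (x ^ (-α₁) * ∑ n ∈ Finset.range (M + 2), (P * H * t₁ / x) ^ n * e n)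
      = x ^ (-α₁) * ∑ n ∈ Finset.range (M + 2), (P * H * t₁ / x) ^ n * e n *
        (c₁ * (a⁻¹ * (1 / q ^ n)) + c₂ * (a * q ^ n) - c₃) := by
    intro c₁ c₂ c₃ e
    simp only [Finset.mul_sum]
    rw [← Finset.sum_add_distrib, ← Finset.sum_sub_distrib]
    refine Finset.sum_congr rfl fun n _ => ?_
    rw [show P * H * t₁ / (q * x) = (P * H * t₁ / x) * (1 / q) by field_simp,
      show P * H * t₁ / (x / q) = (P * H * t₁ / x) * q by field_simp, mul_pow, mul_pow,
      one_div_pow]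
    ring
  rw [S]
  rw [mul_eq_zero]
  right
  rw [← mul_zero (a * x ^ 2), ← T, Finset.mul_sum]
  refine Finset.sum_congr rfl fun n _ => ?_
  have C := coef H A a P Q L t₁ t₂ x (q ^ n) hH.ne' hA.ne' ha.ne' hP.ne' hQ.ne' hL.ne' ht₁ hx.ne'
    (by positivity)
  rw [hHq] at C
  rw [C, pow_succ]
  ring
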